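/- There exist ternary operations t_0,…,t_4 on {0,1,2}, each preserving C_3, ≤_2, and B_n for every n ≥ 2, satisfying the quasi Jónsson condition QJ(4); and there do NOT exist ternary operations t_0,…,t_4 on {0,1,2}, each preserving C_3 and R^=_2, satisfying QJ(4). -/

import Mathlib

/-- The three-element domain `{0,1,2}`. -/
abbrev D3 : Type := Fin 3

/-- `n`-ary operations on `{0,1,2}`. -/
abbrev Op (n : ℕ) : Type := (Fin n → D3) → D3

/-- An `n`-ary operation `f` preserves a `k`-ary relation `R`. -/
def Preserves {n k : ℕ} (f : Op n) (R : Set (Fin k → D3)) : Prop :=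
  ∀ t : Fin n → (Fin k → D3), (∀ i, t i ∈ R) → (fun j => f fun i => t i j) ∈ R

/-- `C₃ = {(0,1),(1,2),(2,0)}`. -/
def C3rel : Set (Fin 2 → D3) :=
  { t | (t 0 = 0 ∧ t 1 = 1) ∨ (t 0 = 1 ∧ t 1 = 2) ∨ (t 0 = 2 ∧ t 1 = 0) }

/-- `≤₂ = {(0,0),(0,1),(1,1)}`. -/
def le2rel : Set (Fin 2 → D3) :=
  { t | (t 0 = 0 ∧ t 1 = 0) ∨ (t 0 = 0 ∧ t 1 = 1) ∨ (t 0 = 1 ∧ t 1 = 1) }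

/-- `B_k = {0,1}^k \ {(0,…,0)}`. -/
def BnRel (k : ℕ) : Set (Fin k → D3) :=
  { t | (∀ i, t i = 0 ∨ t i = 1) ∧ ¬ ∀ i, t i = 0 }

/-- `R⁼₂ = {(x,y,z) : x ∈ {0,1} ∧ (x = 0 → y = z ∈ {0,1})}`. -/
def Req2rel : Set (Fin 3 → D3) :=
  { t | (t 0 = 0 ∨ t 0 = 1) ∧ (t 0 = 0 → t 1 = t 2 ∧ (t 1 = 0 ∨ t 1 = 1)) }

/-- The quasi Jónsson condition `QJ(4)` for ternary operations `t₀,…,t₄`. -/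
def QJ4 (t0 t1 t2 t3 t4 : Op 3) : Prop :=
  (∀ x y z : D3, t0 ![x, y, z] = t0 ![x, x, x]) ∧
  (∀ x y z : D3, t4 ![x, y, z] = t4 ![z, z, z]) ∧
  (∀ x y : D3, t0 ![x, y, x] = t0 ![x, x, x] ∧ t1 ![x, y, x] = t1 ![x, x, x] ∧
    t2 ![x, y, x] = t2 ![x, x, x] ∧ t3 ![x, y, x] = t3 ![x, x, x] ∧
    t4 ![x, y, x] = t4 ![x, x, x]) ∧
  (∀ x z : D3, t0 ![x, x, z] = t1 ![x, x, z] ∧ t2 ![x, x, z] = t3 ![x, x, z]) ∧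
  (∀ x z : D3, t1 ![x, z, z] = t2 ![x, z, z] ∧ t3 ![x, z, z] = t4 ![x, z, z])

/-- Preserving `C₃`, `≤₂` and `B_k` for every `k ≥ 2`. -/
def PresMinf (f : Op 3) : Prop :=
  Preserves f C3rel ∧ Preserves f le2rel ∧ ∀ k, 2 ≤ k → Preserves f (BnRel k)

/-- Preserving `C₃` and `R⁼₂`. -/
def PresQ (f : Op 3) : Prop := Preserves f C3rel ∧ Preserves f Req2rel

/-!
Order `{0,1,2}` cyclically, `0 < 1 < 2 < 0`. The maximum of two elements then commutes with
`x ↦ x + 1`, and on `{0,1}` it is the usual join. The chain `x`, `x ∨ (y ∧ z)`, `x ∨ z`,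
`(x ∧ y) ∨ z`, `z` of lattice polynomials on `{0,1}` therefore extends to operations preserving
`C₃`; the polynomials are monotone and each lies above a variable, which gives `≤₂` and all `B_k`.

Conversely, let `t` preserve `C₃` and `R⁼₂`. Then `t` fixes `0` and `1`, and if `t(0,1,0) = 0`,
then `R⁼₂` makes `t(0,0,1) = 0` equivalent to `t(0,1,1) = 0`. The value `0` thus propagates along a
quasi Jónsson chain of any length, from `t₀(0,0,1) = 0` to `tₙ(0,1,1) = 0`, while
`tₙ(0,1,1) = tₙ(1,1,1) = 1`.
-/

theorem eq_zero_or_eq_one_iff_le_one {a : D3} : a = 0 ∨ a = 1 ↔ a ≤ 1 := by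
  revert a; decide

section Preservation

variable {n : ℕ} {f : Op n}

theorem preserves_C3rel_iff : Preserves f C3rel ↔ ∀ v, f (v + 1) = f v + 1 := by
  have mem_C3rel (u : Fin 2 → D3) : u ∈ C3rel ↔ u 1 = u 0 + 1 := by
    revert u; simp only [C3rel, Set.mem_ofPred_eq]; decide
  simp only [Preserves, mem_C3rel]
  constructor
  · intro hf v
    exact hf (fun i => ![v i, v i + 1]) fun _ => rfl
  · intro hf t ht
    simp only [ht]
    exact hf fun i => t i 0

theorem preserves_le2rel (hmono : MonotoneOn f (Set.Iic 1)) (hone : f 1 = 1) :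
    Preserves f le2rel := by
  have mem_le2rel (u : Fin 2 → D3) : u ∈ le2rel ↔ u 0 ≤ u 1 ∧ u 1 ≤ 1 := by
    revert u; simp only [le2rel, Set.mem_ofPred_eq]; decide
  simp only [Preserves, mem_le2rel]
  intro t ht
  have column_le : (fun i => t i 0) ≤ fun i => t i 1 := fun i => (ht i).1
  have column_le_one : (fun i => t i 1) ≤ 1 := fun i => (ht i).2
  exact ⟨hmono (column_le.trans column_le_one) column_le_one column_le,
    (hmono column_le_one Set.self_mem_Iic column_le_one).trans_eq hone⟩

theorem preserves_BnRel (hle : ∀ v ≤ 1, f v ≤ 1) {i : Fin n} (hi : ∀ v ≤ 1, v i ≤ f v) (k : ℕ) :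
    Preserves f (BnRel k) := by
  simp only [Preserves, BnRel, Set.mem_ofPred_eq, eq_zero_or_eq_one_iff_le_one]
  intro t ht
  have column_le_one (j : Fin k) : (fun i => t i j) ≤ 1 := fun i => (ht i).1 j
  refine ⟨fun j => hle _ (column_le_one j), fun hzero => (ht i).2 fun j => ?_⟩
  exact Fin.le_zero_iff.1 ((hi _ (column_le_one j)).trans_eq (hzero j))

theorem Preserves.apply_eq_zero_or_one (hf : Preserves f Req2rel) {v : Fin n → D3}
    (hv : ∀ i, v i = 0 ∨ v i = 1) : f v = 0 ∨ f v = 1 :=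
  (hf (fun i => ![v i, 0, 0]) fun i => ⟨hv i, fun _ => ⟨rfl, .inl rfl⟩⟩).1

theorem Preserves.apply_eq_apply (hf : Preserves f Req2rel) {a b c : Fin n → D3}
    (h : ∀ i, (a i = 0 ∨ a i = 1) ∧ (a i = 0 → b i = c i ∧ (b i = 0 ∨ b i = 1)))
    (ha : f a = 0) : f b = f c :=
  ((hf (fun i => ![a i, b i, c i]) h).2 ha).1

theorem Preserves.apply_zero_and_apply_one (hC : Preserves f C3rel) (hR : Preserves f Req2rel) :
    f 0 = 0 ∧ f 1 = 1 := by
  have h0 : f 0 = 0 ∨ f 0 = 1 := hR.apply_eq_zero_or_one fun _ => .inl rfl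
  have h1 : f 1 = 0 ∨ f 1 = 1 := hR.apply_eq_zero_or_one fun _ => .inr rfl
  have hsucc : f 1 = f 0 + 1 := by simpa only [zero_add] using preserves_C3rel_iff.1 hC 0
  grind

end Preservation

theorem Preserves.apply_001_eq_zero_iff {f : Op 3} (hf : Preserves f Req2rel)
    (h010 : f ![0, 1, 0] = 0) : f ![0, 0, 1] = 0 ↔ f ![0, 1, 1] = 0 := by
  constructor
  · intro h001
    have : f ![0, 1, 1] = f ![0, 1, 0] := hf.apply_eq_apply (by decide) h001
    exact this.trans h010
  · intro h011
    have : f ![0, 0, 1] = f ![0, 1, 1] := hf.apply_eq_apply (by decide) h011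
    exact this.trans h011

/-- The quasi Jónsson condition `QJ(n)` for `t₀,…,tₙ`; the operations `tᵢ` with `n < i` are
unconstrained. -/
structure QuasiJonsson (n : ℕ) (t : ℕ → Op 3) : Prop where
  first : ∀ x y z, t 0 ![x, y, z] = t 0 ![x, x, x]
  last : ∀ x y z, t n ![x, y, z] = t n ![z, z, z]
  outer : ∀ i ≤ n, ∀ x y, t i ![x, y, x] = t i ![x, x, x]
  even : ∀ i < n, Even i → ∀ x z, t i ![x, x, z] = t (i + 1) ![x, x, z]
  odd : ∀ i < n, Odd i → ∀ x z, t i ![x, z, z] = t (i + 1) ![x, z, z]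

theorem quasiJonsson_four_iff {t : ℕ → Op 3} :
    QuasiJonsson 4 t ↔ QJ4 (t 0) (t 1) (t 2) (t 3) (t 4) := by
  constructor
  · intro h
    exact ⟨h.first, h.last,
      fun x y => ⟨h.outer 0 (by decide) x y, h.outer 1 (by decide) x y, h.outer 2 (by decide) x y,
        h.outer 3 (by decide) x y, h.outer 4 (by decide) x y⟩,
      fun x z => ⟨h.even 0 (by decide) (by decide) x z, h.even 2 (by decide) (by decide) x z⟩,
      fun x z => ⟨h.odd 1 (by decide) (by decide) x z, h.odd 3 (by decide) (by decide) x z⟩⟩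
  · rintro ⟨first, last, outer, even, odd⟩
    refine ⟨first, last, fun i hi x y => ?_, fun i hi hpar x z => ?_, fun i hi hpar x z => ?_⟩
    · obtain ⟨h0, h1, h2, h3, h4⟩ := outer x y
      interval_cases i <;> assumption
    · obtain ⟨h0, h2⟩ := even x z
      interval_cases i <;> first | assumption | exact absurd hpar (by decide)
    · obtain ⟨h1, h3⟩ := odd x z
      interval_cases i <;> first | assumption | exact absurd hpar (by decide)

theorem exists_quasiJonsson_four_iff {P : Op 3 → Prop} :
    (∃ t, (∀ i ≤ 4, P (t i)) ∧ QuasiJonsson 4 t) ↔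
      ∃ t0 t1 t2 t3 t4, P t0 ∧ P t1 ∧ P t2 ∧ P t3 ∧ P t4 ∧ QJ4 t0 t1 t2 t3 t4 := by
  constructor
  · rintro ⟨t, hP, ht⟩
    exact ⟨t 0, t 1, t 2, t 3, t 4, hP 0 (by decide), hP 1 (by decide), hP 2 (by decide),
      hP 3 (by decide), hP 4 (by decide), quasiJonsson_four_iff.1 ht⟩
  · rintro ⟨t0, t1, t2, t3, t4, h0, h1, h2, h3, h4, ht⟩
    let t : ℕ → Op 3
      | 0 => t0
      | 1 => t1
      | 2 => t2
      | 3 => t3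
      | _ => t4
    refine ⟨t, fun i hi => ?_, quasiJonsson_four_iff.2 ht⟩
    interval_cases i <;> assumption

theorem QuasiJonsson.apply_001_eq_zero {n : ℕ} {t : ℕ → Op 3} (ht : QuasiJonsson n t)
    (hR : ∀ i ≤ n, Preserves (t i) Req2rel) (h000 : ∀ i ≤ n, t i ![0, 0, 0] = 0) :
    ∀ i ≤ n, t i ![0, 0, 1] = 0
  | 0, _ => (ht.first 0 0 1).trans (h000 0 n.zero_le)
  | i + 1, hi => by
    have propagates (j : ℕ) (hj : j ≤ n) : t j ![0, 0, 1] = 0 ↔ t j ![0, 1, 1] = 0 :=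
      (hR j hj).apply_001_eq_zero_iff ((ht.outer j hj 0 1).trans (h000 j hj))
    have ih : t i ![0, 0, 1] = 0 := ht.apply_001_eq_zero hR h000 i (by lia)
    rcases i.even_or_odd with heven | hodd
    · rwa [← ht.even i hi heven]
    · rwa [propagates (i + 1) hi, ← ht.odd i hi hodd, ← propagates i (by lia)]

theorem not_quasiJonsson_of_presQ {n : ℕ} {t : ℕ → Op 3} (hQ : ∀ i ≤ n, PresQ (t i)) :
    ¬ QuasiJonsson n t := by
  intro ht
  have fixes (i : ℕ) (hi : i ≤ n) : t i ![0, 0, 0] = 0 ∧ t i ![1, 1, 1] = 1 := by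
    have := Preserves.apply_zero_and_apply_one (hQ i hi).1 (hQ i hi).2
    simpa only [show (0 : Fin 3 → D3) = ![0, 0, 0] by decide,
      show (1 : Fin 3 → D3) = ![1, 1, 1] by decide] using this
  have h000 (i : ℕ) (hi : i ≤ n) : t i ![0, 0, 0] = 0 := (fixes i hi).1
  have h001 : t n ![0, 0, 1] = 0 :=
    ht.apply_001_eq_zero (fun i hi => (hQ i hi).2) h000 n le_rfl
  have hzero : t n ![1, 1, 1] = 0 := by rw [← ht.last 0 0 1, h001]
  exact zero_ne_one (hzero.symm.trans (fixes n le_rfl).2)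

/-- The maximum of two elements for the cyclic order `0 < 1 < 2 < 0`. -/
def cyclicMax (a b : D3) : D3 := if b = a + 1 then b else a

theorem cyclicMax_add_one (a b : D3) : cyclicMax (a + 1) (b + 1) = cyclicMax a b + 1 := by
  simp only [cyclicMax, add_left_inj]; split <;> rfl

/-- The extension to `{0,1,2}` of the chain `x`, `x ∨ (y ∧ z)`, `x ∨ z`, `(x ∧ y) ∨ z`, `z`, `z`, …
of lattice polynomials on `{0,1}`. -/
def cyclicJonsson : ℕ → Op 3
  | 0, v => v 0
  | 1, v => if v 1 = v 2 then cyclicMax (v 0) (v 1) else v 0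
  | 2, v => cyclicMax (v 0) (v 2)
  | 3, v => if v 0 = v 1 then cyclicMax (v 0) (v 2) else v 2
  | _, v => v 2

/-- The lattice polynomials which `cyclicJonsson` extends, for the order `0 < 1 < 2`. -/
def latticeJonsson : ℕ → Op 3
  | 0, v => v 0
  | 1, v => v 0 ⊔ v 1 ⊓ v 2
  | 2, v => v 0 ⊔ v 2
  | 3, v => v 0 ⊓ v 1 ⊔ v 2
  | _, v => v 2

theorem cyclicJonsson_add_one (i : ℕ) (v : Fin 3 → D3) :
    cyclicJonsson i (v + 1) = cyclicJonsson i v + 1 := by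
  unfold cyclicJonsson
  split <;> simp only [Pi.add_apply, Pi.one_apply, add_left_inj, cyclicMax_add_one] <;>
    split <;> rfl

theorem eqOn_latticeJonsson_cyclicJonsson (i : ℕ) :
    Set.EqOn (latticeJonsson i) (cyclicJonsson i) (Set.Iic 1) := by
  intro v hv
  have eq_of_le_one : ∀ x y z : D3, x ≤ 1 → y ≤ 1 → z ≤ 1 →
      (x ⊔ y ⊓ z = if y = z then cyclicMax x y else x) ∧ x ⊔ z = cyclicMax x z ∧
        (x ⊓ y ⊔ z = if x = y then cyclicMax x z else z) := by
    decide
  obtain ⟨h1, h2, h3⟩ := eq_of_le_one (v 0) (v 1) (v 2) (hv 0) (hv 1) (hv 2)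
  match i with
  | 0 => rfl
  | 1 => exact h1
  | 2 => exact h2
  | 3 => exact h3
  | _ + 4 => rfl

theorem monotone_latticeJonsson (i : ℕ) : Monotone (latticeJonsson i) := by
  intro v w hvw
  have h0 := hvw 0
  have h1 := hvw 1
  have h2 := hvw 2
  unfold latticeJonsson
  split <;> gcongr

theorem latticeJonsson_one (i : ℕ) : latticeJonsson i 1 = 1 := by
  unfold latticeJonsson; split <;> rfl

theorem exists_apply_le_latticeJonsson (i : ℕ) : ∃ j, ∀ v, v j ≤ latticeJonsson i v :=
  match i with
  | 0 => ⟨0, fun _ => le_rfl⟩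
  | 1 => ⟨0, fun _ => le_sup_left⟩
  | 2 => ⟨0, fun _ => le_sup_left⟩
  | 3 => ⟨2, fun _ => le_sup_right⟩
  | _ + 4 => ⟨2, fun _ => le_rfl⟩

theorem presMinf_cyclicJonsson (i : ℕ) : PresMinf (cyclicJonsson i) := by
  have heq := eqOn_latticeJonsson_cyclicJonsson i
  have hmono : MonotoneOn (cyclicJonsson i) (Set.Iic 1) :=
    ((monotone_latticeJonsson i).monotoneOn _).congr heq
  have hone : cyclicJonsson i 1 = 1 := (heq Set.self_mem_Iic).symm.trans (latticeJonsson_one i)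
  have hle (v : Fin 3 → D3) (hv : v ≤ 1) : cyclicJonsson i v ≤ 1 :=
    (hmono hv Set.self_mem_Iic hv).trans_eq hone
  obtain ⟨j, hj⟩ := exists_apply_le_latticeJonsson i
  exact ⟨preserves_C3rel_iff.2 (cyclicJonsson_add_one i), preserves_le2rel hmono hone,
    fun k _ => preserves_BnRel hle (fun v hv => (hj v).trans_eq (heq hv)) k⟩

theorem quasiJonsson_cyclicJonsson {n : ℕ} (hn : 4 ≤ n) : QuasiJonsson n cyclicJonsson where
  first _ _ _ := rfl
  last := by
    obtain ⟨m, rfl⟩ := Nat.exists_eq_add_of_le' hn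
    exact fun _ _ _ => rfl
  outer i _ :=
    match i with
    | 0 => by decide
    | 1 => by decide
    | 2 => by decide
    | 3 => by decide
    | _ + 4 => fun _ _ => rfl
  even i _ hi :=
    match i with
    | 0 => by decide
    | 1 => by contradiction
    | 2 => by decide
    | 3 => by contradiction
    | _ + 4 => fun _ _ => rfl
  odd i _ hi :=
    match i with
    | 0 => by contradiction
    | 1 => by decide
    | 2 => by contradiction
    | 3 => by decide
    | _ + 4 => fun _ _ => rfl

theorem stmt16_general :
    (∀ n ≥ 4, ∃ t, (∀ i ≤ n, PresMinf (t i)) ∧ QuasiJonsson n t) ∧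
      ∀ n, ¬ ∃ t, (∀ i ≤ n, PresQ (t i)) ∧ QuasiJonsson n t :=
  ⟨fun _ hn => ⟨cyclicJonsson, fun i _ => presMinf_cyclicJonsson i, quasiJonsson_cyclicJonsson hn⟩,
    fun _ ⟨_, hQ, ht⟩ => not_quasiJonsson_of_presQ hQ ht⟩

/-- `QJ(4)` holds in `M_∞` but not in `Q`. -/
theorem stmt16 :
    (∃ t0 t1 t2 t3 t4 : Op 3, PresMinf t0 ∧ PresMinf t1 ∧ PresMinf t2 ∧ PresMinf t3 ∧
      PresMinf t4 ∧ QJ4 t0 t1 t2 t3 t4) ∧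
    ¬ (∃ t0 t1 t2 t3 t4 : Op 3, PresQ t0 ∧ PresQ t1 ∧ PresQ t2 ∧ PresQ t3 ∧
      PresQ t4 ∧ QJ4 t0 t1 t2 t3 t4) :=
  ⟨exists_quasiJonsson_four_iff.1 (stmt16_general.1 4 le_rfl),
    mt exists_quasiJonsson_four_iff.2 (stmt16_general.2 4)⟩
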